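/- Let n ≥ 1, s, s̃ ∈ ℝ, 0 < p < ∞ and 0 < q, r ≤ ∞ satisfy s > s̃ and s/n + 1/q = s̃/n + 1/p. Then there exists a constant C such that for every measurable function f on ℝⁿ, ‖f‖_{L^{p,r}_{s̃}} ≤ C·‖f‖_{K̇^s_{q,r}}; that is, the Herz space K̇^s_{q,r}(ℝⁿ) embeds continuously into the power-weighted Lorentz space L^{p,r}_{s̃}(ℝⁿ). -/

import Mathlib

open MeasureTheory Set ENNReal Filter

noncomputable section

abbrev Euc (n : ℕ) : Type := EuclideanSpace ℝ (Fin n)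

def annulus (n : ℕ) (j : ℤ) : Set (Euc n) :=
  {x : Euc n | (2 : ℝ) ^ (j - 1) ≤ ‖x‖ ∧ ‖x‖ < (2 : ℝ) ^ j}

def herzNorm (n : ℕ) (s : ℝ) (q r : ℝ≥0∞) (f : Euc n → ℝ) : ℝ≥0∞ :=
  if r = ⊤ then
    ⨆ j : ℤ, ENNReal.ofReal ((2 : ℝ) ^ ((j : ℝ) * s)) *
      eLpNorm ((annulus n j).indicator f) q volume
  else
    (∑' j : ℤ, (ENNReal.ofReal ((2 : ℝ) ^ ((j : ℝ) * s)) *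
      eLpNorm ((annulus n j).indicator f) q volume) ^ r.toReal) ^ (1 / r.toReal)

/-- The decreasing rearrangement `f*(t) = inf {λ > 0 : |{x : |f x| > λ}| ≤ t}`. -/
def decRearrangement (n : ℕ) (f : Euc n → ℝ) (t : ℝ) : ℝ≥0∞ :=
  sInf {l : ℝ≥0∞ | 0 < l ∧ volume {x : Euc n | l < (‖f x‖₊ : ℝ≥0∞)} ≤ ENNReal.ofReal t}

/-- The Lorentz quasi-norm `‖f‖_{L^{p,r}}`. -/
def lorentzNorm (n : ℕ) (p : ℝ) (r : ℝ≥0∞) (f : Euc n → ℝ) : ℝ≥0∞ :=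
  if r = ⊤ then
    ⨆ (t : ℝ) (_ : 0 < t), ENNReal.ofReal (t ^ (1 / p)) * decRearrangement n f t
  else
    (∫⁻ t in Set.Ioi (0 : ℝ),
      (ENNReal.ofReal (t ^ (1 / p)) * decRearrangement n f t) ^ r.toReal *
        ENNReal.ofReal t⁻¹) ^ (1 / r.toReal)

/-- The power-weighted Lorentz quasi-norm `‖f‖_{L^{p,r}_{s}} = ‖|·|^s f‖_{L^{p,r}}`. -/
def lorentzNormW (n : ℕ) (s : ℝ) (p : ℝ) (r : ℝ≥0∞) (f : Euc n → ℝ) : ℝ≥0∞ :=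
  lorentzNorm n p r (fun x => ‖x‖ ^ s * f x)

/-!
Multiplying by `|x|^s̃` shifts the smoothness index of a Herz space by `s̃`, since `|x| ∼ 2^j` on
`A_j`; so one may assume `s̃ = 0` and `s > 0`. Put `a_j = 2^{js} ‖f χ_{A_j}‖_{L^q}` and
`θ = 2^{-s/2}`. To bound `f*` at scale `2^{kn}`, throw away the ball of radius `2^k`, whose measure
is of that order, and apply Chebyshev's inequality on each annulus `A_{k+m}`, `m ≥ 0`. As `s > 0`,
half of the gain `2^{-ms}` can be given up and the measures still sum geometrically, whence
`2^{kn/p} f*(D 2^{kn}) ≲ sup_{m ≥ 0} θ^m a_{k+m}`. The `ℓ^r` quasi-norm of the left-hand side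
controls `‖f‖_{L^{p,r}}`, and that of the right-hand side is at most a constant times
`‖a‖_{ℓ^r}`, because the `r`-th power of the supremum is at most `∑_m θ^{mr} a_{k+m}^r`.
-/

/-- The `j`-th term `2^{js} ‖f χ_{A_j}‖_{L^q}` of the sequence whose `ℓ^r` quasi-norm is the Herz
quasi-norm of `f`. -/
def herzTerm (n : ℕ) (s : ℝ) (q : ℝ≥0∞) (f : Euc n → ℝ) (j : ℤ) : ℝ≥0∞ :=
  2 ^ (j * s) * eLpNorm ((annulus n j).indicator f) q volume

lemma ofReal_two_rpow (x : ℝ) : ENNReal.ofReal ((2 : ℝ) ^ x) = 2 ^ x := by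
  rw [← ENNReal.ofReal_rpow_of_pos two_pos, ENNReal.ofReal_ofNat]

lemma two_rpow_add (x y : ℝ) : (2 : ℝ≥0∞) ^ (x + y) = 2 ^ x * 2 ^ y :=
  ENNReal.rpow_add x y two_ne_zero ENNReal.ofNat_ne_top

lemma two_rpow_neg_mul_cancel_left (x : ℝ) (a : ℝ≥0∞) :
    (2 : ℝ≥0∞) ^ (-x) * (2 ^ x * a) = a := by
  rw [← mul_assoc, ← two_rpow_add, neg_add_cancel, ENNReal.rpow_zero, one_mul]

lemma two_rpow_mul_neg_cancel_left (x : ℝ) (a : ℝ≥0∞) :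
    (2 : ℝ≥0∞) ^ x * (2 ^ (-x) * a) = a := by
  simpa using two_rpow_neg_mul_cancel_left (-x) a

lemma inv_one_sub_rpow_ne_top {θ : ℝ≥0∞} (hθ : θ < 1) {e : ℝ} (he : 0 < e) :
    (1 - θ ^ e)⁻¹ ≠ ⊤ :=
  ENNReal.inv_ne_top.2 (tsub_pos_of_lt (ENNReal.rpow_lt_one hθ he)).ne'

-- The exponent `e` replaces `q.toReal` because the latter is `0` at `q = ⊤`, where decay in `θ` is
-- still needed.
lemma measure_lt_enorm_le_mul_rpow {α ε : Type*} [MeasurableSpace α] {μ : Measure α}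
    [TopologicalSpace ε] [ContinuousENorm ε] {f : α → ε} (hf : AEStronglyMeasurable f μ)
    {q : ℝ≥0∞} (hq : q ≠ 0) {e : ℝ} (he : ENNReal.ofReal e ≤ q) {θ T V : ℝ≥0∞}
    (hθ : θ ≤ 1) (hT : T ≠ 0) (h : eLpNorm f q μ ≤ V ^ (q⁻¹).toReal * (θ * T)) :
    μ {x | T < ‖f x‖ₑ} ≤ V * θ ^ e := by
  rcases eq_or_ne T ⊤ with rfl | hT'
  · simp
  rcases eq_or_ne q ⊤ with rfl | hq'
  · have hle : eLpNormEssSup f μ ≤ T := by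
      simpa using h.trans (mul_le_mul_right (mul_le_of_le_one_left' hθ) _)
    have hnull : μ {x | T < ‖f x‖ₑ} = 0 :=
      measure_mono_null (fun _ hx ↦ hle.trans_lt hx) meas_eLpNormEssSup_lt
    exact hnull.trans_le zero_le
  · have hq₀ : 0 < q.toReal := ENNReal.toReal_pos hq hq'
    have markov : T ^ q.toReal * μ {x | T ≤ ‖f x‖ₑ} ≤ T ^ q.toReal * (V * θ ^ q.toReal) := calc
      _ ≤ eLpNorm f q μ ^ q.toReal := mul_meas_ge_le_pow_eLpNorm' μ hq hq' hf T
      _ ≤ (V ^ (q⁻¹).toReal * (θ * T)) ^ q.toReal := by gcongr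
      _ = T ^ q.toReal * (V * θ ^ q.toReal) := by
        rw [ENNReal.mul_rpow_of_nonneg _ _ hq₀.le, ENNReal.mul_rpow_of_nonneg _ _ hq₀.le,
          ← ENNReal.rpow_mul, ENNReal.toReal_inv, inv_mul_cancel₀ hq₀.ne', ENNReal.rpow_one]
        ring
    calc μ {x | T < ‖f x‖ₑ}
        ≤ μ {x | T ≤ ‖f x‖ₑ} := measure_mono fun _ (hx : T < _) ↦ hx.le
      _ ≤ V * θ ^ q.toReal :=
        (ENNReal.mul_le_mul_iff_right (by simp [hT, hT']) (by simp [hT, hT'])).1 markov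
      _ ≤ V * θ ^ e := mul_le_mul_right (ENNReal.rpow_le_rpow_of_exponent_ge hθ
        ((ENNReal.ofReal_le_iff_le_toReal hq').1 he)) V

-- At `r = ⊤` the constant is `1`, as both exponents `r.toReal` and `1 / r.toReal` are then `0`.
lemma eLpNorm_count_iSup_pow_mul_le {θ r : ℝ≥0∞} (hθ : θ ≤ 1) (hr : r ≠ 0) (a : ℤ → ℝ≥0∞) :
    eLpNorm (fun k ↦ ⨆ m : ℕ, θ ^ m * a (k + m)) r Measure.count ≤
      ((1 - θ ^ r.toReal)⁻¹) ^ (1 / r.toReal) * eLpNorm a r Measure.count := by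
  rcases eq_or_ne r ⊤ with rfl | hr'
  · rw [ENNReal.toReal_top, _root_.div_zero, ENNReal.rpow_zero, one_mul]
    simp only [eLpNorm_exponent_top, eLpNormEssSup_count, enorm_eq_self]
    exact iSup₂_le fun k m ↦
      (mul_le_of_le_one_left' (pow_le_one' hθ m)).trans (le_iSup a (k + m))
  · have hr₀ : 0 < r.toReal := ENNReal.toReal_pos hr hr'
    simp only [eLpNorm_eq_lintegral_rpow_enorm_toReal hr hr', lintegral_count, enorm_eq_self]
    rw [← ENNReal.mul_rpow_of_nonneg _ _ (by positivity)]
    gcongr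
    have iSup_rpow_le (k : ℤ) : (⨆ m : ℕ, θ ^ m * a (k + m)) ^ r.toReal ≤
        ∑' m : ℕ, (θ ^ r.toReal) ^ m * a (k + m) ^ r.toReal := by
      rw [← ENNReal.le_rpow_inv_iff hr₀]
      refine iSup_le fun m ↦ ?_
      rw [ENNReal.le_rpow_inv_iff hr₀, ENNReal.mul_rpow_of_nonneg _ _ hr₀.le,
        ← ENNReal.rpow_natCast, ← ENNReal.rpow_mul, mul_comm (m : ℝ),
        ENNReal.rpow_mul, ENNReal.rpow_natCast]
      exact ENNReal.le_tsum (f := fun m : ℕ ↦ (θ ^ r.toReal) ^ m * a (k + m) ^ r.toReal) m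
    have tsum_shift (m : ℕ) : ∑' k : ℤ, a (k + m) ^ r.toReal = ∑' j, a j ^ r.toReal :=
      (Equiv.addRight (m : ℤ)).tsum_eq fun j ↦ a j ^ r.toReal
    calc ∑' k, (⨆ m : ℕ, θ ^ m * a (k + m)) ^ r.toReal
        ≤ ∑' (k : ℤ) (m : ℕ), (θ ^ r.toReal) ^ m * a (k + m) ^ r.toReal :=
          ENNReal.tsum_le_tsum iSup_rpow_le
      _ = (1 - θ ^ r.toReal)⁻¹ * ∑' j, a j ^ r.toReal := by
        rw [ENNReal.tsum_comm]
        simp only [ENNReal.tsum_mul_left, tsum_shift, ENNReal.tsum_mul_right,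
          ENNReal.tsum_geometric]

section Annulus

variable {n : ℕ}

lemma measurableSet_annulus (j : ℤ) : MeasurableSet (annulus n j) :=
  (measurableSet_le measurable_const measurable_norm).inter
    (measurableSet_lt measurable_norm measurable_const)

lemma exists_mem_annulus_of_zpow_le_norm {k : ℤ} {x : Euc n} (hx : (2 : ℝ) ^ k ≤ ‖x‖) :
    ∃ m : ℕ, x ∈ annulus n (k + m) := by
  have hx₀ : 0 < ‖x‖ := hx.trans_lt' (by positivity)
  obtain ⟨i, hi, hi'⟩ := exists_mem_Ico_zpow hx₀ one_lt_two
  have hki : k < i + 1 := (zpow_lt_zpow_iff_right₀ _root_.one_lt_two).1 (hx.trans_lt hi')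
  obtain ⟨m, hm⟩ := Int.le.dest hki.le
  refine ⟨m, ?_⟩
  rw [hm]
  exact ⟨by simpa using hi, hi'⟩

lemma norm_rpow_le_of_mem_annulus (t : ℝ) {j : ℤ} {x : Euc n} (hx : x ∈ annulus n j) :
    ‖x‖ ^ t ≤ 2 ^ (j * t + |t|) := by
  obtain ⟨hlow, hup⟩ := hx
  rcases le_total 0 t with ht | ht
  · calc ‖x‖ ^ t ≤ ((2 : ℝ) ^ j) ^ t := by gcongr
      _ = 2 ^ (j * t) := by rw [← Real.rpow_intCast, ← Real.rpow_mul zero_le_two]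
      _ ≤ 2 ^ (j * t + |t|) := by gcongr <;> simp
  · calc ‖x‖ ^ t ≤ ((2 : ℝ) ^ (j - 1)) ^ t :=
          Real.rpow_le_rpow_of_nonpos (by positivity) hlow ht
      _ = 2 ^ (j * t + |t|) := by
        rw [← Real.rpow_intCast, ← Real.rpow_mul zero_le_two, abs_of_nonpos ht]
        push_cast
        ring_nf

lemma volume_ball_two_zpow (k : ℤ) :
    volume (Metric.ball (0 : Euc n) (2 ^ k)) =
      2 ^ ((k : ℝ) * n) * volume (Metric.ball (0 : Euc n) 1) := by
  rw [Measure.addHaar_ball_of_pos _ _ (by positivity), finrank_euclideanSpace_fin,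
    ← ofReal_two_rpow, Real.rpow_mul zero_le_two, Real.rpow_intCast, Real.rpow_natCast]

end Annulus

section Herz

variable {n : ℕ} {q r : ℝ≥0∞}

lemma herzNorm_eq_eLpNorm_herzTerm (hr : r ≠ 0) (s : ℝ) (f : Euc n → ℝ) :
    herzNorm n s q r f = eLpNorm (herzTerm n s q f) r Measure.count := by
  unfold herzNorm
  split_ifs with hr'
  · simp [hr', herzTerm, ofReal_two_rpow]
  · simp [eLpNorm_eq_lintegral_rpow_enorm_toReal hr hr', lintegral_count, herzTerm,
      ofReal_two_rpow]

lemma herzTerm_norm_rpow_mul_le (s t : ℝ) (f : Euc n → ℝ) (j : ℤ) :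
    herzTerm n (s - t) q (fun x ↦ ‖x‖ ^ t * f x) j ≤ 2 ^ |t| * herzTerm n s q f j := by
  have hle : eLpNorm ((annulus n j).indicator fun x ↦ ‖x‖ ^ t * f x) q volume ≤
      2 ^ (j * t + |t|) * eLpNorm ((annulus n j).indicator f) q volume := by
    rw [← ofReal_two_rpow]
    refine eLpNorm_le_mul_eLpNorm_of_ae_le_mul (Eventually.of_forall fun x ↦ ?_) q
    by_cases hx : x ∈ annulus n j
    · simp only [indicator_of_mem hx, norm_mul,
        Real.norm_of_nonneg (Real.rpow_nonneg (norm_nonneg x) t)]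
      gcongr
      exact norm_rpow_le_of_mem_annulus t hx
    · simp [hx]
  calc herzTerm n (s - t) q (fun x ↦ ‖x‖ ^ t * f x) j
      ≤ 2 ^ (j * (s - t)) *
          (2 ^ (j * t + |t|) * eLpNorm ((annulus n j).indicator f) q volume) :=
        mul_le_mul_right hle _
    _ = 2 ^ |t| * herzTerm n s q f j := by
      rw [herzTerm, ← mul_assoc, ← mul_assoc, ← two_rpow_add, ← two_rpow_add]
      ring_nf

lemma herzNorm_norm_rpow_mul_le (hr : r ≠ 0) (s t : ℝ) (f : Euc n → ℝ) :
    herzNorm n (s - t) q r (fun x ↦ ‖x‖ ^ t * f x) ≤ 2 ^ |t| * herzNorm n s q r f := by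
  rw [herzNorm_eq_eLpNorm_herzTerm hr, herzNorm_eq_eLpNorm_herzTerm hr]
  exact eLpNorm_le_mul_eLpNorm_of_ae_le_mul'' r .of_discrete
    (Eventually.of_forall (herzTerm_norm_rpow_mul_le s t f))

end Herz

section Lorentz

variable {n : ℕ} {p : ℝ} (f : Euc n → ℝ)

lemma decRearrangement_antitone : Antitone (decRearrangement n f) := fun _ _ h ↦
  sInf_le_sInf fun _ hl ↦ ⟨hl.1, hl.2.trans (ENNReal.ofReal_le_ofReal h)⟩

/-- The function `t ↦ t^{1/p} f*(t)`, whose `L^r(dt/t)` quasi-norm over `(0, ∞)` is the Lorentz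
quasi-norm of `f`. -/
def weightedRearrangement (n : ℕ) (p : ℝ) (f : Euc n → ℝ) (t : ℝ) : ℝ≥0∞ :=
  ENNReal.ofReal (t ^ (1 / p)) * decRearrangement n f t

lemma weightedRearrangement_le (hp : 0 ≤ p) {b t u : ℝ} (hu : 0 < u) (ht : t ∈ Ico u (b * u)) :
    weightedRearrangement n p f t ≤
      ENNReal.ofReal (b ^ (1 / p)) * weightedRearrangement n p f u := by
  have ht₀ : 0 < t := hu.trans_le ht.1
  have hb : 0 < b := pos_of_mul_pos_left (ht₀.trans ht.2) hu.le
  rw [weightedRearrangement, weightedRearrangement, ← mul_assoc,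
    ← ENNReal.ofReal_mul (by positivity), ← Real.mul_rpow hb.le hu.le]
  gcongr
  · exact ht.2.le
  · exact decRearrangement_antitone f ht.1

lemma setLIntegral_Ico_mul_inv_le {b u : ℝ} (hu : 0 < u) :
    ∫⁻ t in Ico u (b * u), ENNReal.ofReal t⁻¹ ≤ ENNReal.ofReal (b - 1) := calc
  ∫⁻ t in Ico u (b * u), ENNReal.ofReal t⁻¹
      ≤ ∫⁻ _ in Ico u (b * u), ENNReal.ofReal u⁻¹ :=
        setLIntegral_mono' measurableSet_Ico fun _ ht ↦
          ENNReal.ofReal_le_ofReal (inv_anti₀ hu ht.1)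
  _ = ENNReal.ofReal (b - 1) := by
    rw [setLIntegral_const, Real.volume_Ico, ← ENNReal.ofReal_mul (by positivity)]
    congr 1
    field_simp

lemma exists_mem_Ico_mul_zpow {b D t : ℝ} (hb : 1 < b) (hD : 0 < D) (ht : 0 < t) :
    ∃ k : ℤ, t ∈ Ico (D * b ^ k) (b * (D * b ^ k)) := by
  obtain ⟨k, hk, hk'⟩ := exists_mem_Ico_zpow (div_pos ht hD) hb
  rw [le_div_iff₀' hD] at hk
  rw [div_lt_iff₀' hD, zpow_add_one₀ (by positivity)] at hk'
  exact ⟨k, hk, hk'.trans_eq (by ring)⟩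

lemma setLIntegral_Ico_weightedRearrangement_rpow_le (hp : 0 ≤ p) {ρ : ℝ} (hρ : 0 ≤ ρ) {b u : ℝ}
    (hu : 0 < u) :
    ∫⁻ t in Ico u (b * u), weightedRearrangement n p f t ^ ρ * ENNReal.ofReal t⁻¹ ≤
      ENNReal.ofReal (b ^ (1 / p)) ^ ρ * ENNReal.ofReal (b - 1) *
        weightedRearrangement n p f u ^ ρ := calc
  _ ≤ ∫⁻ t in Ico u (b * u),
        (ENNReal.ofReal (b ^ (1 / p)) * weightedRearrangement n p f u) ^ ρ *
          ENNReal.ofReal t⁻¹ :=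
      setLIntegral_mono' measurableSet_Ico fun t ht ↦ by
        gcongr
        exact weightedRearrangement_le f hp hu ht
  _ = (ENNReal.ofReal (b ^ (1 / p)) * weightedRearrangement n p f u) ^ ρ *
        ∫⁻ t in Ico u (b * u), ENNReal.ofReal t⁻¹ :=
      lintegral_const_mul _ (by fun_prop)
  _ ≤ (ENNReal.ofReal (b ^ (1 / p)) * weightedRearrangement n p f u) ^ ρ *
        ENNReal.ofReal (b - 1) := by
      gcongr
      exact setLIntegral_Ico_mul_inv_le hu
  _ = _ := by
      rw [ENNReal.mul_rpow_of_nonneg _ _ hρ]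
      ring

lemma setLIntegral_Ioi_weightedRearrangement_rpow_le (hp : 0 ≤ p) {ρ : ℝ} (hρ : 0 ≤ ρ) {b D : ℝ}
    (hb : 1 < b) (hD : 0 < D) :
    ∫⁻ t in Ioi 0, weightedRearrangement n p f t ^ ρ * ENNReal.ofReal t⁻¹ ≤
      ENNReal.ofReal (b ^ (1 / p)) ^ ρ * ENNReal.ofReal (b - 1) *
        ∑' k : ℤ, weightedRearrangement n p f (D * b ^ k) ^ ρ := calc
  _ ≤ ∫⁻ t in ⋃ k : ℤ, Ico (D * b ^ k) (b * (D * b ^ k)),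
        weightedRearrangement n p f t ^ ρ * ENNReal.ofReal t⁻¹ :=
      lintegral_mono_set fun t ht ↦ mem_iUnion.2 (exists_mem_Ico_mul_zpow hb hD ht)
  _ ≤ ∑' k : ℤ, ∫⁻ t in Ico (D * b ^ k) (b * (D * b ^ k)),
        weightedRearrangement n p f t ^ ρ * ENNReal.ofReal t⁻¹ :=
      lintegral_iUnion_le _ _
  _ ≤ ∑' k : ℤ, ENNReal.ofReal (b ^ (1 / p)) ^ ρ * ENNReal.ofReal (b - 1) *
        weightedRearrangement n p f (D * b ^ k) ^ ρ :=
      ENNReal.tsum_le_tsum fun k ↦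
        setLIntegral_Ico_weightedRearrangement_rpow_le f hp hρ (by positivity)
  _ = _ := ENNReal.tsum_mul_left

lemma lorentzNorm_le_eLpNorm_count (hp : 0 ≤ p) {r : ℝ≥0∞} (hr : r ≠ 0) {b D : ℝ} (hb : 1 < b)
    (hD : 0 < D) :
    lorentzNorm n p r f ≤
      ENNReal.ofReal (b ^ (1 / p)) * ENNReal.ofReal (b - 1) ^ (1 / r.toReal) *
        eLpNorm (fun k : ℤ ↦ weightedRearrangement n p f (D * b ^ k)) r Measure.count := by
  unfold lorentzNorm
  split_ifs with hr'
  · subst hr'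
    rw [ENNReal.toReal_top, _root_.div_zero, ENNReal.rpow_zero, mul_one]
    simp only [eLpNorm_exponent_top, eLpNormEssSup_count, enorm_eq_self]
    refine iSup₂_le fun t ht ↦ ?_
    obtain ⟨k, hk⟩ := exists_mem_Ico_mul_zpow hb hD ht
    calc weightedRearrangement n p f t
        ≤ ENNReal.ofReal (b ^ (1 / p)) * weightedRearrangement n p f (D * b ^ k) :=
          weightedRearrangement_le f hp (by positivity) hk
      _ ≤ _ := mul_le_mul_right
          (le_iSup (fun k : ℤ ↦ weightedRearrangement n p f (D * b ^ k)) k) _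
  · have hr₀ : 0 < r.toReal := ENNReal.toReal_pos hr hr'
    simp only [eLpNorm_eq_lintegral_rpow_enorm_toReal hr hr', lintegral_count, enorm_eq_self]
    refine (ENNReal.rpow_le_rpow
      (setLIntegral_Ioi_weightedRearrangement_rpow_le f hp hr₀.le hb hD)
      (by positivity)).trans_eq ?_
    rw [ENNReal.mul_rpow_of_nonneg _ _ (by positivity),
      ENNReal.mul_rpow_of_nonneg _ _ (by positivity), ← ENNReal.rpow_mul,
      mul_one_div_cancel hr₀.ne', ENNReal.rpow_one]

end Lorentz

section Unweighted

variable {n : ℕ} {s p : ℝ} {q : ℝ≥0∞}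

lemma eLpNorm_indicator_annulus_le_of_herzTerm_le (hn : n ≠ 0) (he : s / n + (q⁻¹).toReal = 1 / p)
    {f : Euc n → ℝ} {k : ℤ} {m : ℕ} {l : ℝ≥0∞}
    (h : (2 ^ (-(s / 2))) ^ m * herzTerm n s q f (k + m) ≤ 2 ^ (k * (n / p)) * l) :
    eLpNorm ((annulus n (k + m)).indicator f) q volume ≤
      (2 ^ ((k : ℝ) * n)) ^ (q⁻¹).toReal * ((2 ^ (-(s / 2))) ^ m * l) := by
  set E := eLpNorm ((annulus n (k + m)).indicator f) q volume
  have hn' : (n : ℝ) ≠ 0 := Nat.cast_ne_zero.2 hn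
  have hexp : (n : ℝ) / p = s + n * (q⁻¹).toReal := by
    rw [div_eq_mul_one_div, ← he]
    field_simp
  have hterm : (2 ^ (-(s / 2))) ^ m * herzTerm n s q f (k + m) =
      2 ^ (k * s + m * (s / 2)) * E := by
    rw [herzTerm, ← mul_assoc, ← ENNReal.rpow_mul_natCast, ← two_rpow_add]
    congr 2
    push_cast
    ring
  rw [hterm] at h
  calc E = 2 ^ (-(k * s + m * (s / 2))) * (2 ^ (k * s + m * (s / 2)) * E) :=
        (two_rpow_neg_mul_cancel_left _ E).symm
    _ ≤ 2 ^ (-(k * s + m * (s / 2))) * (2 ^ (k * (n / p)) * l) := mul_le_mul_right h _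
    _ = _ := by
      rw [← mul_assoc, ← mul_assoc, ← ENNReal.rpow_mul_natCast, ← ENNReal.rpow_mul,
        ← two_rpow_add, ← two_rpow_add, hexp]
      ring_nf

lemma volume_lt_enorm_le_of_herzTerm_le (hn : n ≠ 0) (hs : 0 < s) (hq : q ≠ 0)
    (he : s / n + (q⁻¹).toReal = 1 / p) {f : Euc n → ℝ} (hf : AEMeasurable f) {k : ℤ}
    {l : ℝ≥0∞} (hl : l ≠ 0)
    (h : ∀ m : ℕ, (2 ^ (-(s / 2))) ^ m * herzTerm n s q f (k + m) ≤ 2 ^ (k * (n / p)) * l) :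
    volume {x | l < ‖f x‖ₑ} ≤ 2 ^ ((k : ℝ) * n) * (volume (Metric.ball (0 : Euc n) 1) +
      (1 - (2 ^ (-(s / 2))) ^ (min q 1).toReal)⁻¹) := by
  set θ : ℝ≥0∞ := 2 ^ (-(s / 2))
  have hθ : θ ≤ 1 := ENNReal.rpow_le_one_of_one_le_of_neg one_le_two (by linarith)
  have cover : {x | l < ‖f x‖ₑ} ⊆ Metric.ball 0 (2 ^ k) ∪
      ⋃ m : ℕ, {x | l < ‖(annulus n (k + m)).indicator f x‖ₑ} := fun x hx ↦ by
    rcases lt_or_ge ‖x‖ (2 ^ k) with hxk | hxk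
    · exact Or.inl (mem_ball_zero_iff.2 hxk)
    · obtain ⟨m, hm⟩ := exists_mem_annulus_of_zpow_le_norm hxk
      exact Or.inr (mem_iUnion.2 ⟨m, by simpa [hm] using hx⟩)
  have annulus_le (m : ℕ) : volume {x | l < ‖(annulus n (k + m)).indicator f x‖ₑ} ≤
      2 ^ ((k : ℝ) * n) * (θ ^ (min q 1).toReal) ^ m := by
    rw [← ENNReal.rpow_mul_natCast, mul_comm _ (m : ℝ), ENNReal.rpow_natCast_mul]
    exact measure_lt_enorm_le_mul_rpow
      (hf.indicator (measurableSet_annulus _)).aestronglyMeasurable hq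
      (ENNReal.ofReal_toReal_le.trans (min_le_left q 1)) (pow_le_one' hθ m) hl
      (eLpNorm_indicator_annulus_le_of_herzTerm_le hn he (h m))
  calc volume {x | l < ‖f x‖ₑ}
      ≤ volume (Metric.ball (0 : Euc n) (2 ^ k)) +
          ∑' m : ℕ, volume {x | l < ‖(annulus n (k + m)).indicator f x‖ₑ} :=
        (measure_mono cover).trans <| (measure_union_le _ _).trans <|
          add_le_add_right (measure_iUnion_le _) _
    _ ≤ 2 ^ ((k : ℝ) * n) * volume (Metric.ball (0 : Euc n) 1) +
          ∑' m : ℕ, 2 ^ ((k : ℝ) * n) * (θ ^ (min q 1).toReal) ^ m :=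
        add_le_add (volume_ball_two_zpow k).le (ENNReal.tsum_le_tsum annulus_le)
    _ = _ := by rw [ENNReal.tsum_mul_left, ENNReal.tsum_geometric, mul_add]

lemma exists_weightedRearrangement_le_iSup_herzTerm (hn : n ≠ 0) (hs : 0 < s) (hq : q ≠ 0)
    (he : s / n + (q⁻¹).toReal = 1 / p) :
    ∃ D > 0, ∀ f : Euc n → ℝ, AEMeasurable f → ∀ k : ℤ,
      weightedRearrangement n p f (D * (2 ^ n) ^ k) ≤
        ENNReal.ofReal (D ^ (1 / p)) *
          ⨆ m : ℕ, (2 ^ (-(s / 2))) ^ m * herzTerm n s q f (k + m) := by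
  set D : ℝ≥0∞ := volume (Metric.ball (0 : Euc n) 1) +
    (1 - (2 ^ (-(s / 2))) ^ (min q 1).toReal)⁻¹ with hD
  have hD_top : D ≠ ⊤ := by
    have he_pos : 0 < (min q 1).toReal := ENNReal.toReal_pos (by simp [hq]) (by simp)
    have hθ : (2 : ℝ≥0∞) ^ (-(s / 2)) < 1 :=
      ENNReal.rpow_lt_one_of_one_lt_of_neg one_lt_two (by linarith)
    exact ENNReal.add_ne_top.2 ⟨measure_ball_lt_top.ne, inv_one_sub_rpow_ne_top hθ he_pos⟩
  have hD_pos : 0 < D.toReal := ENNReal.toReal_pos (by simp [hD]) hD_top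
  refine ⟨D.toReal, hD_pos, fun f hf k ↦ ?_⟩
  have zpow_eq : ((2 : ℝ) ^ n) ^ k = 2 ^ ((k : ℝ) * n) := by
    rw [mul_comm, Real.rpow_mul zero_le_two, Real.rpow_intCast, Real.rpow_natCast]
  set S := ⨆ m : ℕ, (2 ^ (-(s / 2))) ^ m * herzTerm n s q f (k + m)
  have dec_le : decRearrangement n f (D.toReal * (2 ^ n) ^ k) ≤ 2 ^ (-(k * (n / p))) * S := by
    refine le_of_forall_gt_imp_ge_of_dense fun l hl ↦ sInf_le ⟨pos_of_gt hl, ?_⟩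
    rw [zpow_eq, ENNReal.ofReal_mul ENNReal.toReal_nonneg, ENNReal.ofReal_toReal hD_top,
      ofReal_two_rpow, mul_comm]
    refine volume_lt_enorm_le_of_herzTerm_le hn hs hq he hf (pos_of_gt hl).ne' fun m ↦ ?_
    calc _ ≤ S := le_iSup (fun m : ℕ ↦ (2 ^ (-(s / 2))) ^ m * herzTerm n s q f (k + m)) m
      _ = 2 ^ (k * (n / p)) * (2 ^ (-(k * (n / p))) * S) :=
        (two_rpow_mul_neg_cancel_left _ S).symm
      _ ≤ 2 ^ (k * (n / p)) * l := by gcongr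
  calc weightedRearrangement n p f (D.toReal * (2 ^ n) ^ k)
      ≤ ENNReal.ofReal ((D.toReal * (2 ^ n) ^ k) ^ (1 / p)) * (2 ^ (-(k * (n / p))) * S) :=
        mul_le_mul_right dec_le _
    _ = ENNReal.ofReal (D.toReal ^ (1 / p)) * S := by
      rw [zpow_eq, Real.mul_rpow hD_pos.le (by positivity), ← Real.rpow_mul zero_le_two,
        ENNReal.ofReal_mul (by positivity), ofReal_two_rpow, mul_assoc, mul_one_div,
        mul_div_assoc, two_rpow_mul_neg_cancel_left]

theorem exists_lorentzNorm_le_mul_herzNorm (hn : n ≠ 0) (hs : 0 < s) (hq : q ≠ 0)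
    {r : ℝ≥0∞} (hr : r ≠ 0) (he : s / n + (q⁻¹).toReal = 1 / p) :
    ∃ C ≠ ⊤, ∀ f : Euc n → ℝ, AEMeasurable f →
      lorentzNorm n p r f ≤ C * herzNorm n s q r f := by
  have hp : 0 < p := one_div_pos.1 (he ▸ by positivity)
  obtain ⟨D, hD, hdec⟩ := exists_weightedRearrangement_le_iSup_herzTerm hn hs hq he
  set θ : ℝ≥0∞ := 2 ^ (-(s / 2))
  have hθ : θ < 1 := ENNReal.rpow_lt_one_of_one_lt_of_neg one_lt_two (by linarith)
  set L : ℝ≥0∞ := ENNReal.ofReal ((2 ^ n) ^ (1 / p)) * ENNReal.ofReal (2 ^ n - 1) ^ (1 / r.toReal)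
  set H : ℝ≥0∞ := ((1 - θ ^ r.toReal)⁻¹) ^ (1 / r.toReal)
  refine ⟨L * (ENNReal.ofReal (D ^ (1 / p)) * H), ?_, fun f hf ↦ ?_⟩
  · have hH : H ≠ ⊤ := by
      rcases eq_or_ne r ⊤ with rfl | hr'
      · simp [H]
      · exact ENNReal.rpow_ne_top_of_nonneg (by positivity)
          (inv_one_sub_rpow_ne_top hθ (ENNReal.toReal_pos hr hr'))
    finiteness
  rw [herzNorm_eq_eLpNorm_herzTerm hr]
  calc lorentzNorm n p r f
      ≤ L * eLpNorm (fun k : ℤ ↦ weightedRearrangement n p f (D * (2 ^ n) ^ k)) r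
          Measure.count :=
        lorentzNorm_le_eLpNorm_count f hp.le hr (one_lt_pow₀ _root_.one_lt_two hn) hD
    _ ≤ L * (ENNReal.ofReal (D ^ (1 / p)) *
          eLpNorm (fun k ↦ ⨆ m : ℕ, θ ^ m * herzTerm n s q f (k + m)) r Measure.count) := by
        gcongr
        exact eLpNorm_le_mul_eLpNorm_of_ae_le_mul'' r .of_discrete
          (Eventually.of_forall (hdec f hf))
    _ ≤ L * (ENNReal.ofReal (D ^ (1 / p)) *
          (H * eLpNorm (herzTerm n s q f) r Measure.count)) := by
        gcongr
        exact eLpNorm_count_iSup_pow_mul_le hθ.le hr _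
    _ = _ := by ring

end Unweighted

/-- If `s > s̃` and `s/n + 1/q = s̃/n + 1/p`, the Herz space `K̇^s_{q,r}(ℝⁿ)` embeds
continuously into the power-weighted Lorentz space `L^{p,r}_{s̃}(ℝⁿ)`. -/
theorem herz_embeds_lorentz
    (n : ℕ) (hn : 1 ≤ n) (s st p : ℝ) (q r : ℝ≥0∞)
    (hp : 0 < p) (hq : 0 < q) (hr : 0 < r)
    (hss : st < s)
    (he : s / (n : ℝ) + (q⁻¹).toReal = st / (n : ℝ) + 1 / p) :
    ∃ C : ℝ, 0 < C ∧ ∀ f : Euc n → ℝ, Measurable f →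
      lorentzNormW n st p r f ≤ ENNReal.ofReal C * herzNorm n s q r f := by
  have hn₀ : n ≠ 0 := Nat.one_le_iff_ne_zero.1 hn
  obtain ⟨C, hC, hunweighted⟩ := exists_lorentzNorm_le_mul_herzNorm (r := r) hn₀
    (sub_pos.2 hss) hq.ne' hr.ne' (show (s - st) / n + (q⁻¹).toReal = 1 / p by
      rw [sub_div]; linarith)
  have hC' : C * 2 ^ |st| ≠ ⊤ := by finiteness
  refine ⟨(C * 2 ^ |st|).toReal + 1, by positivity, fun f hf ↦ ?_⟩
  calc lorentzNormW n st p r f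
      ≤ C * herzNorm n (s - st) q r (fun x ↦ ‖x‖ ^ st * f x) :=
        hunweighted _ (by fun_prop)
    _ ≤ C * (2 ^ |st| * herzNorm n s q r f) := by
        gcongr
        exact herzNorm_norm_rpow_mul_le hr.ne' s st f
    _ = C * 2 ^ |st| * herzNorm n s q r f := (mul_assoc _ _ _).symm
    _ ≤ ENNReal.ofReal ((C * 2 ^ |st|).toReal + 1) * herzNorm n s q r f := by
        gcongr
        exact (ENNReal.le_ofReal_iff_toReal_le hC' (by positivity)).2 (lt_add_one _).le
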